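/- Let d ≥ 1 be an integer. Let φ : (0,∞) → (0,∞) be increasing and differentiable with φ' positive and decreasing, such that λ ↦ λ² φ'(λ)/φ(λ)² is increasing on (0,∞), and suppose there exist σ > 0, λ₀ > 0 and δ ∈ (0,1] such that φ'(λx) ≤ σ x^{−δ} φ'(λ) for all x ≥ 1 and λ ≥ λ₀. Let u : (0,∞) → (0,∞) be decreasing with ∫₀^∞ e^{−λt} u(t) dt = 1/φ(λ) for all λ > 0, and assume ∫₀^R λ^{d/2−1}/φ(λ) dλ < ∞ for some R > 0. When d ≤ 2, assume additionally that d + 2δ − 2 > 0 and there exist σ' > 0 and δ' with 1 − d/2 < δ' < min(1 + d/2, 2δ + (d−2)/2) such that φ'(λx) ≥ σ' x^{−δ'} φ'(λ) for all x ≥ 1 and λ ≥ λ₀. Then the function g(r) = ∫₀^∞ (4πt)^{−d/2} exp(−r²/(4t)) u(t) dt satisfies g(r) ≍ r^{−d−2} φ'(r^{−2})/φ(r^{−2})² as r → 0+, i.e. there exist constants c₁, c₂ > 0 and r₀ ∈ (0,1) with c₁ r^{−d−2} φ'(r^{−2})/φ(r^{−2})² ≤ g(r) ≤ c₂ r^{−d−2}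 φ'(r^{−2})/φ(r^{−2})² for all 0 < r < r₀. -/

import Mathlib

open MeasureTheory Real Set

/-
With `η(λ) = λ² φ'(λ) / φ(λ)²`, the mean value theorem applied to `1/φ`, whose derivative is
`-η(λ)/λ²`, gives `λ (1/φ(λ) - 1/φ(2λ)) ≍ η(λ)` at infinity. The left side is `λ` times an
increment of the Laplace transform of the decreasing function `u`, and since `η` grows more slowly
than `λ²` this forces `u(t) ≍ η(1/t)` as `t → 0`: the times below `ε/λ` contribute at most a small
multiple of `η(λ)`, so that `u(ε/λ)` has to account for the rest. Thus `u(1/λ)` inherits from `η`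
power bounds in both directions, the lower one with an exponent `κ > 1 - d/2`: for `d > 2` one can
take `κ = 0` because `η` is monotone, and for `d ≤ 2` it comes from (B). At squared distance `ρ` the
Gaussian factor suppresses the times `t < ρ`, the bound with `κ` makes the integrand integrable over
`t > ρ` on the scale `ρ`, up to a fixed time `T` beyond which the integral stays bounded, and the
times of order `ρ` give `g ≍ ρ^(1-d/2) u(ρ)`.
-/

section Development

open Filter Asymptotics Topology

/-- Weak upper scaling condition at infinity with exponent `α`, as in (A-3), where it is imposed on
`φ'` with `α = -δ`. The constant and the threshold are existential, so the condition only concerns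
large arguments. -/
def UpperScaling (f : ℝ → ℝ) (α : ℝ) : Prop :=
  ∃ C > 0, ∀ᶠ l in atTop, ∀ x ≥ 1, f (l * x) ≤ C * x ^ α * f l

/-- Weak lower scaling condition at infinity with exponent `α`, as in (B), where it is imposed on
`φ'` with `α = -δ'`. -/
def LowerScaling (f : ℝ → ℝ) (α : ℝ) : Prop :=
  ∃ c > 0, ∀ᶠ l in atTop, ∀ x ≥ 1, c * x ^ α * f l ≤ f (l * x)

section Scaling

variable {f g : ℝ → ℝ} {α β : ℝ}

lemma eventually_atTop_forall_mul {p : ℝ → Prop} (h : ∀ᶠ l in atTop, p l) :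
    ∀ᶠ l in atTop, ∀ x ≥ 1, p (l * x) := by
  filter_upwards [eventually_forall_ge_atTop.2 h, eventually_ge_atTop 0] with l hl hl0 x hx
  exact hl _ (le_mul_of_one_le_right hl0 hx)

lemma exists_eventually_le_mul_of_isBigO {X : Type*} {F : Filter X} {f g : X → ℝ}
    (hg : ∀ᶠ x in F, 0 ≤ g x) (h : f =O[F] g) : ∃ C > 0, ∀ᶠ x in F, f x ≤ C * g x := by
  obtain ⟨C, hC, hbound⟩ := h.exists_pos
  refine ⟨C, hC, ?_⟩
  filter_upwards [hbound.bound, hg] with x hx hgx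
  exact (le_norm_self _).trans (by rwa [norm_of_nonneg hgx] at hx)

lemma isBigO_of_eventually_le_mul {X : Type*} {F : Filter X} {f g : X → ℝ} {C : ℝ}
    (hf : ∀ᶠ x in F, 0 ≤ f x) (hg : ∀ᶠ x in F, 0 ≤ g x) (h : ∀ᶠ x in F, f x ≤ C * g x) :
    f =O[F] g := by
  refine .of_bound C ?_
  filter_upwards [hf, hg, h] with x hfx hgx hx
  rwa [norm_of_nonneg hfx, norm_of_nonneg hgx]

lemma isTheta_comp_tendsto {X Y E F : Type*} [Norm E] [Norm F] {f : X → E} {g : X → F}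
    {l : Filter X} {l' : Filter Y} {k : Y → X} (h : f =Θ[l] g) (hk : Tendsto k l' l) :
    (fun y ↦ f (k y)) =Θ[l'] fun y ↦ g (k y) :=
  ⟨h.1.comp_tendsto hk, h.2.comp_tendsto hk⟩

lemma upperScaling_pow (n : ℕ) : UpperScaling (fun l ↦ l ^ n) n :=
  ⟨1, one_pos, .of_forall fun l x _ ↦ by
    refine le_of_eq ?_
    simp only [rpow_natCast]
    ring⟩

lemma lowerScaling_pow (n : ℕ) : LowerScaling (fun l ↦ l ^ n) n :=
  ⟨1, one_pos, .of_forall fun l x _ ↦ by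
    refine le_of_eq ?_
    simp only [rpow_natCast]
    ring⟩

lemma lowerScaling_zero_of_monotoneOn (hf : MonotoneOn f (Ioi 0)) : LowerScaling f 0 := by
  refine ⟨1, one_pos, ?_⟩
  filter_upwards [eventually_gt_atTop 0] with l hl x hx
  rw [rpow_zero, one_mul, one_mul]
  exact hf hl (mul_pos hl (one_pos.trans_le hx)) (le_mul_of_one_le_right hl.le hx)

namespace UpperScaling

lemma mono_exponent (h : UpperScaling f α) (hαβ : α ≤ β) (hf : ∀ᶠ l in atTop, 0 ≤ f l) :
    UpperScaling f β := by
  obtain ⟨C, hC, h⟩ := h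
  refine ⟨C, hC, ?_⟩
  filter_upwards [h, hf] with l hl hfl x hx
  exact (hl x hx).trans (by gcongr)

lemma mul (hf : UpperScaling f α) (hg : UpperScaling g β)
    (hf0 : ∀ᶠ l in atTop, 0 ≤ f l) (hg0 : ∀ᶠ l in atTop, 0 ≤ g l) :
    UpperScaling (fun l ↦ f l * g l) (α + β) := by
  obtain ⟨C, hC, hf⟩ := hf
  obtain ⟨D, hD, hg⟩ := hg
  refine ⟨C * D, mul_pos hC hD, ?_⟩
  filter_upwards [hf, hg, hf0, eventually_atTop_forall_mul hg0] with l hfl hgl hfl0 hgl0 x hx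
  have hx0 : 0 < x := one_pos.trans_le hx
  calc f (l * x) * g (l * x) ≤ (C * x ^ α * f l) * (D * x ^ β * g l) :=
        mul_le_mul (hfl x hx) (hgl x hx) (hgl0 x hx) (by positivity)
    _ = C * D * x ^ (α + β) * (f l * g l) := by rw [rpow_add hx0]; ring

lemma inv (h : UpperScaling f α) (hf : ∀ᶠ l in atTop, 0 < f l) :
    LowerScaling (fun l ↦ (f l)⁻¹) (-α) := by
  obtain ⟨C, hC, h⟩ := h
  refine ⟨C⁻¹, inv_pos.2 hC, ?_⟩
  filter_upwards [h, eventually_atTop_forall_mul hf] with l hl hfl x hx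
  rw [rpow_neg (zero_le_one.trans hx), ← mul_inv, ← mul_inv]
  exact inv_anti₀ (hfl x hx) (hl x hx)

lemma comp_mul_isBigO (h : UpperScaling f α) (hf : ∀ᶠ l in atTop, 0 ≤ f l) {x : ℝ} (hx : 1 ≤ x) :
    (fun l ↦ f (l * x)) =O[atTop] f := by
  obtain ⟨C, -, h⟩ := h
  exact isBigO_of_eventually_le_mul ((eventually_atTop_forall_mul hf).mono fun l hl ↦ hl x hx) hf
    (h.mono fun l hl ↦ hl x hx)

lemma of_isTheta (h : UpperScaling f α) (hfg : f =Θ[atTop] g)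
    (hf : ∀ᶠ l in atTop, 0 ≤ f l) (hg : ∀ᶠ l in atTop, 0 ≤ g l) : UpperScaling g α := by
  obtain ⟨C, hC, h⟩ := h
  obtain ⟨A, hA, hfg'⟩ := exists_eventually_le_mul_of_isBigO hg hfg.1
  obtain ⟨B, hB, hgf⟩ := exists_eventually_le_mul_of_isBigO hf hfg.2
  refine ⟨B * C * A, by positivity, ?_⟩
  filter_upwards [h, hfg', eventually_atTop_forall_mul hgf] with l hl hfgl hgfl x hx
  calc g (l * x) ≤ B * f (l * x) := hgfl x hx
    _ ≤ B * (C * x ^ α * (A * g l)) := by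
        have : 0 < x := one_pos.trans_le hx
        gcongr
        exact (hl x hx).trans (by gcongr)
    _ = B * C * A * x ^ α * g l := by ring

lemma exists_le_of_comp_inv (h : UpperScaling (fun l ↦ f l⁻¹) α) :
    ∃ C > 0, ∀ᶠ s in 𝓝[>] 0, ∀ t ∈ Ioc 0 s, f t ≤ C * (s / t) ^ α * f s := by
  obtain ⟨C, hC, h⟩ := h
  refine ⟨C, hC, ?_⟩
  filter_upwards [tendsto_inv_nhdsGT_zero.eventually h, self_mem_nhdsWithin] with s hs hs0 t ht
  have hts := hs (s / t) ((one_le_div ht.1).2 ht.2)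
  have hs' : s ≠ 0 := ne_of_gt hs0
  rwa [inv_inv, ← mul_div_assoc, inv_mul_cancel₀ hs', one_div, inv_inv] at hts

end UpperScaling

namespace LowerScaling

lemma mul (hf : LowerScaling f α) (hg : LowerScaling g β)
    (hf0 : ∀ᶠ l in atTop, 0 ≤ f l) (hg0 : ∀ᶠ l in atTop, 0 ≤ g l) :
    LowerScaling (fun l ↦ f l * g l) (α + β) := by
  obtain ⟨c, hc, hf⟩ := hf
  obtain ⟨d, hd, hg⟩ := hg
  refine ⟨c * d, mul_pos hc hd, ?_⟩
  filter_upwards [hf, hg, hg0, eventually_atTop_forall_mul hf0] with l hfl hgl hgl0 hfl0 x hx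
  have hx0 : 0 < x := one_pos.trans_le hx
  calc c * d * x ^ (α + β) * (f l * g l) = (c * x ^ α * f l) * (d * x ^ β * g l) := by
        rw [rpow_add hx0]; ring
    _ ≤ f (l * x) * g (l * x) :=
        mul_le_mul (hfl x hx) (hgl x hx) (by positivity) (hfl0 x hx)

lemma inv (h : LowerScaling f α) (hf : ∀ᶠ l in atTop, 0 < f l) :
    UpperScaling (fun l ↦ (f l)⁻¹) (-α) := by
  obtain ⟨c, hc, h⟩ := h
  refine ⟨c⁻¹, inv_pos.2 hc, ?_⟩
  filter_upwards [h, hf] with l hl hfl x hx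
  have hx0 : 0 < x := one_pos.trans_le hx
  rw [rpow_neg hx0.le, ← mul_inv, ← mul_inv]
  exact inv_anti₀ (by positivity) (hl x hx)

lemma isBigO_comp_mul (h : LowerScaling f α) (hf : ∀ᶠ l in atTop, 0 ≤ f l) {x : ℝ} (hx : 1 ≤ x) :
    f =O[atTop] fun l ↦ f (l * x) := by
  obtain ⟨c, hc, h⟩ := h
  have : 0 < x := one_pos.trans_le hx
  refine isBigO_of_eventually_le_mul (C := (c * x ^ α)⁻¹) hf
    ((eventually_atTop_forall_mul hf).mono fun l hl ↦ hl x hx) (h.mono fun l hl ↦ ?_)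
  rw [← div_eq_inv_mul, le_div_iff₀' (by positivity)]
  exact hl x hx

lemma of_isTheta (h : LowerScaling f α) (hfg : f =Θ[atTop] g)
    (hf : ∀ᶠ l in atTop, 0 < f l) (hg : ∀ᶠ l in atTop, 0 < g l) : LowerScaling g α := by
  have hinv := (h.inv hf).of_isTheta hfg.inv (hf.mono fun _ h ↦ (inv_pos.2 h).le)
    (hg.mono fun _ h ↦ (inv_pos.2 h).le)
  simpa only [inv_inv, neg_neg] using hinv.inv (hg.mono fun _ h ↦ inv_pos.2 h)

lemma rpow_isBigO (h : LowerScaling f α) (hf : ∀ᶠ l in atTop, 0 < f l) :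
    (fun l ↦ l ^ α) =O[atTop] f := by
  obtain ⟨c, hc, h⟩ := h
  obtain ⟨θ, hθ, hfθ, hθ0⟩ := (h.and (hf.and (eventually_gt_atTop 0))).exists
  refine isBigO_of_eventually_le_mul (C := θ ^ α / (c * f θ))
    ((eventually_ge_atTop 0).mono fun l hl ↦ rpow_nonneg hl α) (hf.mono fun _ h ↦ h.le) ?_
  filter_upwards [eventually_ge_atTop θ] with l hl
  have hscale := hθ (l / θ) ((one_le_div hθ0).2 hl)
  rw [mul_div_cancel₀ l hθ0.ne', div_rpow (hθ0.le.trans hl) hθ0.le] at hscale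
  have : 0 < θ ^ α := rpow_pos_of_pos hθ0 α
  calc l ^ α = θ ^ α / (c * f θ) * (c * (l ^ α / θ ^ α) * f θ) := by field_simp
    _ ≤ θ ^ α / (c * f θ) * f l := by gcongr

lemma exists_le_of_comp_inv (h : LowerScaling (fun l ↦ f l⁻¹) α) :
    ∃ C > 0, ∀ᶠ t in 𝓝[>] 0, ∀ s ∈ Ioc 0 t, f t ≤ C * (s / t) ^ α * f s := by
  obtain ⟨c, hc, h⟩ := h
  refine ⟨c⁻¹, inv_pos.2 hc, ?_⟩
  filter_upwards [tendsto_inv_nhdsGT_zero.eventually h, self_mem_nhdsWithin] with t ht ht0 s hs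
  have hst := ht (t / s) ((one_le_div hs.1).2 hs.2)
  have ht' : 0 < t := ht0
  have hsα : 0 < (s / t) ^ α := rpow_pos_of_pos (div_pos hs.1 ht') α
  rw [inv_inv, ← mul_div_assoc, inv_mul_cancel₀ ht'.ne', one_div, inv_inv, ← inv_div,
    inv_rpow (div_pos hs.1 ht').le] at hst
  calc f t = c⁻¹ * (s / t) ^ α * (c * ((s / t) ^ α)⁻¹ * f t) := by field_simp
    _ ≤ c⁻¹ * (s / t) ^ α * f s := by gcongr

end LowerScaling

end Scaling

/-- The rate `η(λ) = λ² φ'(λ) / φ(λ)²`: the potential density satisfies `u(t) ≍ η(1/t)` as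
`t → 0+`. -/
noncomputable def potentialRate (φ φ' : ℝ → ℝ) (l : ℝ) : ℝ :=
  l ^ 2 * φ' l / φ l ^ 2

section Exponent

variable {φ φ' : ℝ → ℝ} {α γ : ℝ}

lemma potentialRate_pos (hφ : ∀ l > 0, 0 < φ l) (hφ' : ∀ l > 0, 0 < φ' l) :
    ∀ l > 0, 0 < potentialRate φ φ' l := by
  intro l hl
  have := hφ l hl
  have := hφ' l hl
  unfold potentialRate
  positivity

lemma deriv_mul_sub_le_sub_of_antitoneOn {s t : ℝ} (hst : s ≤ t)
    (hderiv : ∀ x ∈ Icc s t, HasDerivAt φ (φ' x) x) (hφ' : AntitoneOn φ' (Icc s t)) :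
    φ' t * (t - s) ≤ φ t - φ s := by
  refine (convex_Icc s t).mul_sub_le_image_sub_of_le_deriv
    (fun x hx ↦ (hderiv x hx).continuousAt.continuousWithinAt)
    (fun x hx ↦ (hderiv x (interior_subset hx)).differentiableAt.differentiableWithinAt)
    (fun x hx ↦ ?_) s (left_mem_Icc.2 hst) t (right_mem_Icc.2 hst) hst
  rw [(hderiv x (interior_subset hx)).deriv]
  exact hφ' (interior_subset hx) (right_mem_Icc.2 hst) (interior_subset hx).2

lemma sub_le_deriv_mul_sub_of_antitoneOn {s t : ℝ} (hst : s ≤ t)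
    (hderiv : ∀ x ∈ Icc s t, HasDerivAt φ (φ' x) x) (hφ' : AntitoneOn φ' (Icc s t)) :
    φ t - φ s ≤ φ' s * (t - s) := by
  refine (convex_Icc s t).image_sub_le_mul_sub_of_deriv_le
    (fun x hx ↦ (hderiv x hx).continuousAt.continuousWithinAt)
    (fun x hx ↦ (hderiv x (interior_subset hx)).differentiableAt.differentiableWithinAt)
    (fun x hx ↦ ?_) s (left_mem_Icc.2 hst) t (right_mem_Icc.2 hst) hst
  rw [(hderiv x (interior_subset hx)).deriv]
  exact hφ' (left_mem_Icc.2 hst) (interior_subset hx) (interior_subset hx).1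

lemma mul_deriv_le_two_mul (hφ : ∀ l > 0, 0 < φ l) (hderiv : ∀ l > 0, HasDerivAt φ (φ' l) l)
    (hφ' : AntitoneOn φ' (Ioi 0)) {l : ℝ} (hl : 0 < l) : l * φ' l ≤ 2 * φ l := by
  have hpos : Icc (l / 2) l ⊆ Ioi 0 := fun x hx ↦ (half_pos hl).trans_le hx.1
  have hmvt := deriv_mul_sub_le_sub_of_antitoneOn (half_le_self hl.le)
    (fun x hx ↦ hderiv x (hpos hx)) (hφ'.mono hpos)
  linarith [hφ (l / 2) (half_pos hl)]

lemma monotoneOn_of_hasDerivAt_pos (hderiv : ∀ l > 0, HasDerivAt φ (φ' l) l)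
    (hφ' : ∀ l > 0, 0 < φ' l) : MonotoneOn φ (Ioi 0) := by
  refine monotoneOn_of_deriv_nonneg (convex_Ioi 0)
    (fun l hl ↦ (hderiv l hl).continuousAt.continuousWithinAt)
    (fun l hl ↦ (hderiv l (interior_subset hl)).differentiableAt.differentiableWithinAt)
    fun l hl ↦ ?_
  rw [(hderiv l (interior_subset hl)).deriv]
  exact (hφ' l (interior_subset hl)).le

lemma antitoneOn_deriv_div_sq (hφ : ∀ l > 0, 0 < φ l) (hmono : MonotoneOn φ (Ioi 0))
    (hφ' : ∀ l > 0, 0 < φ' l) (hanti : AntitoneOn φ' (Ioi 0)) :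
    AntitoneOn (fun l ↦ φ' l / φ l ^ 2) (Ioi 0) := fun s hs _ ht hst ↦
  div_le_div₀ (hφ' s hs).le (hanti hs ht hst) (pow_pos (hφ s hs) 2)
    (pow_le_pow_left₀ (hφ s hs).le (hmono hs ht hst) 2)

lemma le_add_mul_rpow_of_hasDerivAt_le {f f' : ℝ → ℝ} {M x : ℝ} (hM : 0 ≤ M) (hγ : γ < 1)
    (hf : ∀ y ≥ 1, HasDerivAt f (f' y) y) (hf' : ∀ y ≥ 1, f' y ≤ M * y ^ (-γ)) (hx : 1 ≤ x) :
    f x ≤ f 1 + M / (1 - γ) * x ^ (1 - γ) := by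
  have hγ' : 0 < 1 - γ := sub_pos.2 hγ
  have hbarrier : ∀ y ≥ 1, HasDerivAt (fun y ↦ f y - M / (1 - γ) * y ^ (1 - γ))
      (f' y - M * y ^ (-γ)) y := by
    intro y hy
    have hpow := hasDerivAt_rpow_const (p := 1 - γ) (.inl (one_pos.trans_le hy).ne')
    refine ((hf y hy).sub (hpow.const_mul (M / (1 - γ)))).congr_deriv ?_
    rw [sub_sub_cancel_left]
    field_simp
  have hdecr : AntitoneOn (fun y ↦ f y - M / (1 - γ) * y ^ (1 - γ)) (Ici 1) := by
    refine antitoneOn_of_deriv_nonpos (convex_Ici 1)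
      (fun y hy ↦ (hbarrier y hy).continuousAt.continuousWithinAt)
      (fun y hy ↦ (hbarrier y (interior_subset hy)).differentiableAt.differentiableWithinAt)
      fun y hy ↦ ?_
    rw [(hbarrier y (interior_subset hy)).deriv]
    exact sub_nonpos.2 (hf' y (interior_subset hy))
  have hle : f x - M / (1 - γ) * x ^ (1 - γ) ≤ f 1 - M / (1 - γ) := by
    simpa only [mul_one, one_rpow] using hdecr self_mem_Ici hx hx
  linarith [div_nonneg hM hγ'.le]

lemma UpperScaling.of_hasDerivAt (hφ' : UpperScaling φ' (-γ)) (hγ : γ < 1)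
    (hφ : ∀ l > 0, 0 < φ l) (hderiv : ∀ l > 0, HasDerivAt φ (φ' l) l)
    (hanti : AntitoneOn φ' (Ioi 0)) : UpperScaling φ (1 - γ) := by
  obtain ⟨C, hC, hφ'⟩ := hφ'
  have hγ' : 0 < 1 - γ := sub_pos.2 hγ
  refine ⟨1 + 2 * C / (1 - γ), by positivity, ?_⟩
  filter_upwards [hφ', eventually_gt_atTop 0] with l hl hl0 x hx
  have hφl := hφ l hl0
  have hcomp : ∀ y ≥ 1, HasDerivAt (fun y ↦ φ (l * y)) (l * φ' (l * y)) y := fun y hy ↦ by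
    have hly := hderiv (l * y) (mul_pos hl0 (one_pos.trans_le hy))
    simpa only [Function.comp_def, mul_one, id, mul_comm (φ' _)] using
      hly.comp y ((hasDerivAt_id y).const_mul l)
  have hslope : ∀ y ≥ 1, l * φ' (l * y) ≤ 2 * C * φ l * y ^ (-γ) := by
    intro y hy
    have : 0 < y := one_pos.trans_le hy
    calc l * φ' (l * y) ≤ l * (C * y ^ (-γ) * φ' l) := by gcongr; exact hl y hy
      _ = C * y ^ (-γ) * (l * φ' l) := by ring
      _ ≤ C * y ^ (-γ) * (2 * φ l) :=
          mul_le_mul_of_nonneg_left (mul_deriv_le_two_mul hφ hderiv hanti hl0) (by positivity)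
      _ = 2 * C * φ l * y ^ (-γ) := by ring
  calc φ (l * x) ≤ φ (l * 1) + 2 * C * φ l / (1 - γ) * x ^ (1 - γ) :=
        le_add_mul_rpow_of_hasDerivAt_le (by positivity) hγ hcomp hslope hx
    _ ≤ φ l * x ^ (1 - γ) + 2 * C * φ l / (1 - γ) * x ^ (1 - γ) := by
        rw [mul_one]
        gcongr
        exact le_mul_of_one_le_right hφl.le (one_le_rpow hx hγ'.le)
    _ = (1 + 2 * C / (1 - γ)) * x ^ (1 - γ) * φ l := by ring

lemma potentialRate_eq_mul_inv :
    potentialRate φ φ' = fun l ↦ l ^ 2 * φ' l * (φ l * φ l)⁻¹ := by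
  ext l
  rw [potentialRate, div_eq_mul_inv, sq (φ l)]

lemma upperScaling_potentialRate (hφ : ∀ l > 0, 0 < φ l) (hmono : MonotoneOn φ (Ioi 0))
    (hφ' : ∀ l > 0, 0 < φ' l) (h : UpperScaling φ' α) :
    UpperScaling (potentialRate φ φ') (2 + α) := by
  have hφ0 : ∀ᶠ l in atTop, 0 < φ l := (eventually_gt_atTop 0).mono hφ
  have hφ'0 : ∀ᶠ l in atTop, 0 < φ' l := (eventually_gt_atTop 0).mono hφ'
  have hden : LowerScaling (fun l ↦ φ l * φ l) (0 + 0) :=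
    (lowerScaling_zero_of_monotoneOn hmono).mul (lowerScaling_zero_of_monotoneOn hmono)
      (hφ0.mono fun _ ↦ le_of_lt) (hφ0.mono fun _ ↦ le_of_lt)
  have hnum : UpperScaling (fun l ↦ l ^ 2 * φ' l) ((2 : ℕ) + α) :=
    (upperScaling_pow 2).mul h (.of_forall sq_nonneg) (hφ'0.mono fun _ ↦ le_of_lt)
  rw [potentialRate_eq_mul_inv]
  convert hnum.mul (hden.inv (hφ0.mono fun _ h ↦ mul_pos h h))
    (hφ'0.mono fun l h ↦ mul_nonneg (sq_nonneg l) h.le)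
    (hφ0.mono fun _ h ↦ (inv_pos.2 (mul_pos h h)).le) using 1
  push_cast
  ring

lemma lowerScaling_potentialRate {β : ℝ} (hφ : ∀ l > 0, 0 < φ l) (hφ' : ∀ l > 0, 0 < φ' l)
    (h' : LowerScaling φ' α) (h : UpperScaling φ β) :
    LowerScaling (potentialRate φ φ') (2 + α - 2 * β) := by
  have hφ0 : ∀ᶠ l in atTop, 0 < φ l := (eventually_gt_atTop 0).mono hφ
  have hφ'0 : ∀ᶠ l in atTop, 0 < φ' l := (eventually_gt_atTop 0).mono hφ'
  have hden : UpperScaling (fun l ↦ φ l * φ l) (β + β) :=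
    h.mul h (hφ0.mono fun _ ↦ le_of_lt) (hφ0.mono fun _ ↦ le_of_lt)
  have hnum : LowerScaling (fun l ↦ l ^ 2 * φ' l) ((2 : ℕ) + α) :=
    (lowerScaling_pow 2).mul h' (.of_forall sq_nonneg) (hφ'0.mono fun _ ↦ le_of_lt)
  rw [potentialRate_eq_mul_inv]
  convert hnum.mul (hden.inv (hφ0.mono fun _ h ↦ mul_pos h h))
    (hφ'0.mono fun l h ↦ mul_nonneg (sq_nonneg l) h.le)
    (hφ0.mono fun _ h ↦ (inv_pos.2 (mul_pos h h)).le) using 1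
  push_cast
  ring

lemma sub_inv_mem_Icc (hφ : ∀ l > 0, 0 < φ l) (hmono : MonotoneOn φ (Ioi 0))
    (hderiv : ∀ l > 0, HasDerivAt φ (φ' l) l) (hφ' : ∀ l > 0, 0 < φ' l)
    (hanti : AntitoneOn φ' (Ioi 0)) {l : ℝ} (hl : 0 < l) :
    l * (1 / φ l - 1 / φ (2 * l)) ∈
      Icc (potentialRate φ φ' (2 * l) / 4) (potentialRate φ φ' l) := by
  have hpos : Icc l (2 * l) ⊆ Ioi 0 := fun x hx ↦ hl.trans_le hx.1
  have hl2 : l ≤ 2 * l := by linarith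
  have hinv : ∀ x ∈ Icc l (2 * l), HasDerivAt (fun x ↦ -(φ x)⁻¹) (φ' x / φ x ^ 2) x := by
    intro x hx
    simpa only [neg_div, neg_neg] using
      ((hderiv x (hpos hx)).fun_inv (hφ x (hpos hx)).ne').fun_neg
  have hrate := (antitoneOn_deriv_div_sq hφ hmono hφ' hanti).mono hpos
  have hlower := deriv_mul_sub_le_sub_of_antitoneOn hl2 hinv hrate
  have hupper := sub_le_deriv_mul_sub_of_antitoneOn hl2 hinv hrate
  simp only [one_div, potentialRate, mem_Icc]
  constructor
  · calc (2 * l) ^ 2 * φ' (2 * l) / φ (2 * l) ^ 2 / 4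
        = l * (φ' (2 * l) / φ (2 * l) ^ 2 * (2 * l - l)) := by ring
      _ ≤ l * (-(φ (2 * l))⁻¹ - -(φ l)⁻¹) := by gcongr
      _ = l * ((φ l)⁻¹ - (φ (2 * l))⁻¹) := by ring
  · calc l * ((φ l)⁻¹ - (φ (2 * l))⁻¹) = l * (-(φ (2 * l))⁻¹ - -(φ l)⁻¹) := by ring
      _ ≤ l * (φ' l / φ l ^ 2 * (2 * l - l)) := by gcongr
      _ = l ^ 2 * φ' l / φ l ^ 2 := by ring

lemma mul_sub_inv_isTheta_potentialRate (hφ : ∀ l > 0, 0 < φ l) (hmono : MonotoneOn φ (Ioi 0))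
    (hderiv : ∀ l > 0, HasDerivAt φ (φ' l) l) (hφ' : ∀ l > 0, 0 < φ' l)
    (hanti : AntitoneOn φ' (Ioi 0)) (hη : LowerScaling (potentialRate φ φ') α) :
    (fun l ↦ l * (1 / φ l - 1 / φ (2 * l))) =Θ[atTop] potentialRate φ φ' := by
  have hη0 : ∀ᶠ l in atTop, 0 < potentialRate φ φ' l :=
    (eventually_gt_atTop 0).mono (potentialRate_pos hφ hφ')
  have hbounds := fun l (hl : 0 < l) ↦ sub_inv_mem_Icc hφ hmono hderiv hφ' hanti hl
  have hη2 : ∀ᶠ l in atTop, 0 < potentialRate φ φ' (2 * l) := by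
    filter_upwards [eventually_gt_atTop 0] with l hl
    exact potentialRate_pos hφ hφ' (2 * l) (by positivity)
  have hincr : ∀ᶠ l in atTop, 0 ≤ l * (1 / φ l - 1 / φ (2 * l)) := by
    filter_upwards [eventually_gt_atTop 0, hη2] with l hl hηl
    exact (div_pos hηl four_pos).le.trans (hbounds l hl).1
  constructor
  · refine isBigO_of_eventually_le_mul (C := 1) hincr (hη0.mono fun _ ↦ le_of_lt) ?_
    filter_upwards [eventually_gt_atTop 0] with l hl
    rw [one_mul]
    exact (hbounds l hl).2
  · have hdouble := hη.isBigO_comp_mul (hη0.mono fun _ ↦ le_of_lt) one_le_two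
    simp only [mul_comm _ (2 : ℝ)] at hdouble
    refine hdouble.trans (isBigO_of_eventually_le_mul (C := 4) (hη2.mono fun _ ↦ le_of_lt) hincr ?_)
    filter_upwards [eventually_gt_atTop 0] with l hl
    linarith [(hbounds l hl).1]

end Exponent

/-- The Laplace transform of `u` on `(0, ∞)`. As for any Bochner integral, a divergent integral has
the value `0`. -/
noncomputable def laplace (u : ℝ → ℝ) (l : ℝ) : ℝ :=
  ∫ t in Ioi 0, exp (-(l * t)) * u t

section Laplace

lemma mul_exp_neg_two_mul_le (y : ℝ) : y * exp (-(2 * y)) ≤ exp (-y) - exp (-(2 * y)) := by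
  have hexp : exp (-y) = exp y * exp (-(2 * y)) := by rw [← exp_add]; ring_nf
  rw [hexp, ← sub_one_mul]
  gcongr
  linarith [add_one_le_exp y]

lemma exp_neg_sub_exp_neg_two_mul_le {y : ℝ} (hy : 0 ≤ y) : exp (-y) - exp (-(2 * y)) ≤ y :=
  calc exp (-y) - exp (-(2 * y)) = exp (-y) * (1 - exp (-y)) := by
        rw [mul_one_sub, ← exp_add]; ring_nf
    _ ≤ 1 * (1 - exp (-y)) := by
        have hle : exp (-y) ≤ 1 := exp_le_one_iff.2 (neg_nonpos.2 hy)
        exact mul_le_mul_of_nonneg_right hle (sub_nonneg.2 hle)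
    _ ≤ y := by linarith [add_one_le_exp (-y)]

lemma exists_mem_Ioc_mul_rpow_le {p b : ℝ} (A : ℝ) (hp : 0 < p) (hb : 0 < b) :
    ∃ ε ∈ Ioc (0 : ℝ) 1, A * ε ^ p ≤ b := by
  have hlim : Tendsto (fun ε : ℝ ↦ A * ε ^ p) (𝓝[>] 0) (𝓝 0) := by
    have hcont := (continuousAt_rpow_const 0 p (.inr hp.le)).tendsto.const_mul A
    rw [zero_rpow hp.ne', mul_zero] at hcont
    exact hcont.mono_left nhdsWithin_le_nhds
  obtain ⟨ε, hle, hε⟩ := ((hlim.eventually (ge_mem_nhds hb)).and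
    (Ioc_mem_nhdsGT one_pos)).exists
  exact ⟨ε, hε, hle⟩

variable {u : ℝ → ℝ} {l : ℝ}

lemma laplace_nonneg (hu : ∀ t > 0, 0 ≤ u t) : 0 ≤ laplace u l :=
  setIntegral_nonneg measurableSet_Ioi fun t ht ↦ mul_nonneg (exp_pos _).le (hu t ht)

lemma integrableOn_laplace_of_ne_zero (h : laplace u l ≠ 0) :
    IntegrableOn (fun t ↦ exp (-(l * t)) * u t) (Ioi 0) :=
  not_imp_comm.1 integral_undef h

lemma integrableOn_laplace_sub (hint : ∀ l > 0, IntegrableOn (fun t ↦ exp (-(l * t)) * u t) (Ioi 0))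
    (hl : 0 < l) :
    IntegrableOn (fun t ↦ (exp (-(l * t)) - exp (-(2 * (l * t)))) * u t) (Ioi 0) := by
  simp only [sub_mul, ← mul_assoc 2 l]
  exact (hint l hl).sub (hint (2 * l) (by positivity))

lemma laplace_sub_laplace_two_mul
    (hint : ∀ l > 0, IntegrableOn (fun t ↦ exp (-(l * t)) * u t) (Ioi 0)) (hl : 0 < l) :
    laplace u l - laplace u (2 * l) =
      ∫ t in Ioi 0, (exp (-(l * t)) - exp (-(2 * (l * t)))) * u t := by
  simp only [sub_mul, ← mul_assoc 2 l]
  exact (integral_sub (hint l hl) (hint (2 * l) (by positivity))).symm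

lemma comp_inv_le_mul_laplace_sub (hu : ∀ t > 0, 0 ≤ u t) (hanti : AntitoneOn u (Ioi 0))
    (hint : ∀ l > 0, IntegrableOn (fun t ↦ exp (-(l * t)) * u t) (Ioi 0)) (hl : 0 < l) :
    u l⁻¹ ≤ 4 * exp 2 * (l * (laplace u l - laplace u (2 * l))) := by
  have hinv : 0 < l⁻¹ := inv_pos.2 hl
  have hsub : Ioc (l⁻¹ / 2) l⁻¹ ⊆ Ioi 0 := fun t ht ↦ (half_pos hinv).trans ht.1
  have hI := integrableOn_laplace_sub hint hl
  have hbound : ∀ t ∈ Ioc (l⁻¹ / 2) l⁻¹,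
      exp (-2) / 2 * u l⁻¹ ≤ (exp (-(l * t)) - exp (-(2 * (l * t)))) * u t := by
    intro t ht
    have hlt : l * t ≤ 1 := (le_inv_mul_iff₀ hl).1 (by simpa only [mul_one] using ht.2)
    have hlt' : 1 / 2 ≤ l * t := (inv_mul_le_iff₀ hl).1 (by linarith [ht.1])
    refine mul_le_mul ?_ (hanti (hsub ht) hinv ht.2) (hu _ hinv) ?_
    · calc exp (-2) / 2 = 1 / 2 * exp (-2) := by ring
        _ ≤ l * t * exp (-(2 * (l * t))) := by gcongr; linarith
        _ ≤ exp (-(l * t)) - exp (-(2 * (l * t))) := mul_exp_neg_two_mul_le _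
    · exact sub_nonneg.2 (exp_le_exp.2 (by linarith))
  have hlower : l⁻¹ / 2 * (exp (-2) / 2 * u l⁻¹) ≤ laplace u l - laplace u (2 * l) :=
    calc l⁻¹ / 2 * (exp (-2) / 2 * u l⁻¹)
        = ∫ _ in Ioc (l⁻¹ / 2) l⁻¹, exp (-2) / 2 * u l⁻¹ := by
          rw [setIntegral_const, Real.volume_real_Ioc_of_le (half_le_self hinv.le), sub_half,
            smul_eq_mul]
      _ ≤ ∫ t in Ioc (l⁻¹ / 2) l⁻¹, (exp (-(l * t)) - exp (-(2 * (l * t)))) * u t :=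
          setIntegral_mono_on (integrableOn_const measure_Ioc_lt_top.ne) (hI.mono_set hsub)
            measurableSet_Ioc hbound
      _ ≤ laplace u l - laplace u (2 * l) := by
          rw [laplace_sub_laplace_two_mul hint hl]
          refine setIntegral_mono_set hI ?_ hsub.eventuallyLE
          filter_upwards [ae_restrict_mem measurableSet_Ioi] with t (ht : 0 < t)
          exact mul_nonneg (sub_nonneg.2 (exp_le_exp.2 (by linarith [mul_pos hl ht]))) (hu t ht)
  calc u l⁻¹ = 4 * exp 2 * (l * (l⁻¹ / 2 * (exp (-2) / 2 * u l⁻¹))) := by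
        rw [exp_neg]; field_simp; norm_num
    _ ≤ 4 * exp 2 * (l * (laplace u l - laplace u (2 * l))) := by gcongr

lemma comp_inv_le_mul_laplace (hu : ∀ t > 0, 0 ≤ u t) (hanti : AntitoneOn u (Ioi 0))
    (hint : ∀ l > 0, IntegrableOn (fun t ↦ exp (-(l * t)) * u t) (Ioi 0)) (hl : 0 < l) :
    u l⁻¹ ≤ 4 * exp 2 * (l * laplace u l) := by
  refine (comp_inv_le_mul_laplace_sub hu hanti hint hl).trans ?_
  gcongr
  exact sub_le_self _ (laplace_nonneg hu)

lemma setIntegral_Ioc_laplace_sub_le {s B α : ℝ} (hl : 0 < l) (hs : 0 < s) (hα : α < 2)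
    (hu : ∀ t > 0, 0 ≤ u t)
    (hint : ∀ l > 0, IntegrableOn (fun t ↦ exp (-(l * t)) * u t) (Ioi 0))
    (hB : ∀ t ∈ Ioc 0 s, u t ≤ B * t ^ (-α)) :
    ∫ t in Ioc 0 s, (exp (-(l * t)) - exp (-(2 * (l * t)))) * u t ≤
      l * B * (s ^ (2 - α) / (2 - α)) := by
  have hpow : IntegrableOn (fun t : ℝ ↦ l * B * t ^ (1 - α)) (Ioc 0 s) :=
    ((intervalIntegrable_iff_integrableOn_Ioc_of_le hs.le).1
      (intervalIntegral.intervalIntegrable_rpow' (by linarith))).const_mul _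
  calc ∫ t in Ioc 0 s, (exp (-(l * t)) - exp (-(2 * (l * t)))) * u t
      ≤ ∫ t in Ioc 0 s, l * B * t ^ (1 - α) := by
        refine setIntegral_mono_on ((integrableOn_laplace_sub hint hl).mono_set
          Ioc_subset_Ioi_self) hpow measurableSet_Ioc fun t ht ↦ ?_
        have ht0 : 0 < t := ht.1
        calc (exp (-(l * t)) - exp (-(2 * (l * t)))) * u t ≤ l * t * (B * t ^ (-α)) :=
              mul_le_mul (exp_neg_sub_exp_neg_two_mul_le (by positivity)) (hB t ht) (hu t ht0)
                (by positivity)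
          _ = l * B * t ^ (1 - α) := by rw [sub_eq_add_neg, rpow_add ht0, rpow_one]; ring
    _ = l * B * (s ^ (2 - α) / (2 - α)) := by
        rw [integral_const_mul, ← intervalIntegral.integral_of_le hs.le,
          integral_rpow (.inl (by linarith)), show 1 - α + 1 = 2 - α by ring,
          zero_rpow (sub_pos.2 hα).ne', sub_zero]

lemma setIntegral_Ioi_laplace_sub_le {s : ℝ} (hl : 0 < l) (hs : 0 < s)
    (hu : ∀ t > 0, 0 ≤ u t) (hanti : AntitoneOn u (Ioi 0))
    (hint : ∀ l > 0, IntegrableOn (fun t ↦ exp (-(l * t)) * u t) (Ioi 0)) :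
    ∫ t in Ioi s, (exp (-(l * t)) - exp (-(2 * (l * t)))) * u t ≤ u s / l := by
  have hexp : IntegrableOn (fun t : ℝ ↦ exp (-l * t) * u s) (Ioi s) :=
    (integrableOn_exp_mul_Ioi (neg_lt_zero.2 hl) s).mul_const _
  calc ∫ t in Ioi s, (exp (-(l * t)) - exp (-(2 * (l * t)))) * u t
      ≤ ∫ t in Ioi s, exp (-l * t) * u s := by
        refine setIntegral_mono_on ((integrableOn_laplace_sub hint hl).mono_set
          (Ioi_subset_Ioi hs.le)) hexp measurableSet_Ioi fun t ht ↦ ?_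
        have ht0 : 0 < t := hs.trans ht
        rw [neg_mul]
        exact mul_le_mul (sub_le_self _ (exp_pos _).le) (hanti hs ht0 (le_of_lt ht)) (hu t ht0)
          (exp_pos _).le
    _ = exp (-l * s) * (u s / l) := by
        rw [integral_mul_const, integral_exp_mul_Ioi (neg_lt_zero.2 hl), neg_div_neg_eq]
        ring
    _ ≤ u s / l := by
        refine mul_le_of_le_one_left (div_nonneg (hu s hs) hl.le) (exp_le_one_iff.2 ?_)
        rw [neg_mul, neg_nonpos]
        positivity

lemma laplace_sub_le {s B α : ℝ} (hl : 0 < l) (hs : 0 < s) (hα : α < 2)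
    (hu : ∀ t > 0, 0 ≤ u t) (hanti : AntitoneOn u (Ioi 0))
    (hint : ∀ l > 0, IntegrableOn (fun t ↦ exp (-(l * t)) * u t) (Ioi 0))
    (hB : ∀ t ∈ Ioc 0 s, u t ≤ B * t ^ (-α)) :
    laplace u l - laplace u (2 * l) ≤ l * B * (s ^ (2 - α) / (2 - α)) + u s / l := by
  have hI := integrableOn_laplace_sub hint hl
  rw [laplace_sub_laplace_two_mul hint hl, ← Ioc_union_Ioi_eq_Ioi hs.le,
    setIntegral_union (Ioc_disjoint_Ioi le_rfl) measurableSet_Ioi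
      (hI.mono_set Ioc_subset_Ioi_self) (hI.mono_set (Ioi_subset_Ioi hs.le))]
  exact add_le_add (setIntegral_Ioc_laplace_sub_le hl hs hα hu hint hB)
    (setIntegral_Ioi_laplace_sub_le hl hs hu hanti hint)

variable {η : ℝ → ℝ} {α : ℝ}

lemma exists_mul_laplace_sub_le (hα : α < 2) (hu : ∀ t > 0, 0 ≤ u t) (hanti : AntitoneOn u (Ioi 0))
    (hint : ∀ l > 0, IntegrableOn (fun t ↦ exp (-(l * t)) * u t) (Ioi 0))
    (hη0 : ∀ᶠ l in atTop, 0 ≤ η l) (hη : UpperScaling η α)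
    (huη : (fun l ↦ u l⁻¹) =O[atTop] η) :
    ∃ A, ∀ ε ∈ Ioc (0 : ℝ) 1, ∀ᶠ l in atTop,
      l * (laplace u l - laplace u (2 * l)) ≤ A * ε ^ (2 - α) * η l + u (ε / l) := by
  obtain ⟨C, -, hη⟩ := hη
  obtain ⟨D, hD, huη⟩ := exists_eventually_le_mul_of_isBigO hη0 huη
  refine ⟨D * C / (2 - α), fun ε hε ↦ ?_⟩
  filter_upwards [hη, eventually_atTop_forall_mul huη, eventually_gt_atTop 0]
    with l hηl huηl hl
  have hεl : 0 < ε / l := div_pos hε.1 hl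
  have hB : ∀ t ∈ Ioc 0 (ε / l), u t ≤ D * C * l ^ (-α) * η l * t ^ (-α) := by
    intro t ht
    have hlt : 0 < l * t := mul_pos hl ht.1
    have hx : 1 ≤ (l * t)⁻¹ :=
      (one_le_inv₀ hlt).2 (((le_div_iff₀' hl).1 ht.2).trans hε.2)
    have hlx : l * (l * t)⁻¹ = t⁻¹ := by field_simp
    calc u t = u (l * (l * t)⁻¹)⁻¹ := by rw [hlx, inv_inv]
      _ ≤ D * η (l * (l * t)⁻¹) := huηl _ hx
      _ ≤ D * (C * (l * t)⁻¹ ^ α * η l) := by gcongr; exact hηl _ hx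
      _ = D * C * l ^ (-α) * η l * t ^ (-α) := by
          rw [inv_rpow hlt.le, ← rpow_neg hlt.le, mul_rpow hl.le ht.1.le]; ring
  calc l * (laplace u l - laplace u (2 * l))
      ≤ l * (l * (D * C * l ^ (-α) * η l) * ((ε / l) ^ (2 - α) / (2 - α)) + u (ε / l) / l) := by
        gcongr
        exact laplace_sub_le hl hεl hα hu hanti hint hB
    _ = D * C / (2 - α) * ε ^ (2 - α) * η l + u (ε / l) := by
        rw [div_rpow hε.1.le hl.le, rpow_neg hl.le, rpow_sub hl, rpow_two]
        have : 0 < l ^ α := rpow_pos_of_pos hl α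
        field_simp

lemma isBigO_comp_inv_of_isBigO_mul_laplace_sub (hα : α < 2) (hu : ∀ t > 0, 0 ≤ u t)
    (hanti : AntitoneOn u (Ioi 0))
    (hint : ∀ l > 0, IntegrableOn (fun t ↦ exp (-(l * t)) * u t) (Ioi 0))
    (hη0 : ∀ᶠ l in atTop, 0 ≤ η l) (hη : UpperScaling η α) (huη : (fun l ↦ u l⁻¹) =O[atTop] η)
    (hJ0 : ∀ᶠ l in atTop, 0 ≤ l * (laplace u l - laplace u (2 * l)))
    (hηJ : η =O[atTop] fun l ↦ l * (laplace u l - laplace u (2 * l))) :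
    η =O[atTop] fun l ↦ u l⁻¹ := by
  have hu_inv : ∀ᶠ l in atTop, 0 ≤ u l⁻¹ := by
    filter_upwards [eventually_gt_atTop 0] with l hl using hu _ (inv_pos.2 hl)
  obtain ⟨A, hA⟩ := exists_mul_laplace_sub_le hα hu hanti hint hη0 hη huη
  obtain ⟨D, hD, hηJ⟩ := exists_eventually_le_mul_of_isBigO hJ0 hηJ
  obtain ⟨ε, hε, hεA⟩ := exists_mem_Ioc_mul_rpow_le (D * A) (sub_pos.2 hα) one_half_pos
  have hε_lower : ∀ᶠ l in atTop, η l ≤ 2 * D * u (ε / l) := by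
    filter_upwards [hA ε hε, hηJ, hη0] with l hAl hηl hηl0
    have habsorb : η l ≤ D * A * ε ^ (2 - α) * η l + D * u (ε / l) :=
      hηl.trans ((mul_le_mul_of_nonneg_left hAl hD.le).trans_eq (by ring))
    linarith [mul_le_mul_of_nonneg_right hεA hηl0]
  have hscale : Tendsto (fun l : ℝ ↦ l * ε) atTop atTop := tendsto_id.atTop_mul_const hε.1
  have hη_scale : η =O[atTop] fun l ↦ η (l * ε) := by
    have hcomp := (hη.comp_mul_isBigO hη0 ((one_le_inv₀ hε.1).2 hε.2)).comp_tendsto hscale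
    simpa only [Function.comp_def, mul_assoc, mul_inv_cancel₀ hε.1.ne', mul_one] using hcomp
  refine hη_scale.trans
    (isBigO_of_eventually_le_mul (C := 2 * D) (hscale.eventually hη0) hu_inv ?_)
  filter_upwards [hscale.eventually hε_lower] with l hl
  rwa [mul_comm l ε, div_mul_cancel_left₀ hε.1.ne', mul_comm ε l] at hl

/-- A Tauberian theorem, with the increments `L u(l) - L u(2l)` of the Laplace transform in place of
`L u` itself because `L u` need not be regular. -/
theorem comp_inv_isTheta_of_mul_laplace_sub_isTheta (hα : α < 2) (hu : ∀ t > 0, 0 ≤ u t)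
    (hanti : AntitoneOn u (Ioi 0))
    (hint : ∀ l > 0, IntegrableOn (fun t ↦ exp (-(l * t)) * u t) (Ioi 0))
    (hη0 : ∀ᶠ l in atTop, 0 ≤ η l) (hη : UpperScaling η α)
    (hJ : (fun l ↦ l * (laplace u l - laplace u (2 * l))) =Θ[atTop] η) :
    (fun l ↦ u l⁻¹) =Θ[atTop] η := by
  have hu_inv : ∀ᶠ l in atTop, 0 ≤ u l⁻¹ := by
    filter_upwards [eventually_gt_atTop 0] with l hl using hu _ (inv_pos.2 hl)
  have hJ_ge : ∀ᶠ l in atTop, u l⁻¹ ≤ 4 * exp 2 * (l * (laplace u l - laplace u (2 * l))) := by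
    filter_upwards [eventually_gt_atTop 0] with l hl
    exact comp_inv_le_mul_laplace_sub hu hanti hint hl
  have hJ0 : ∀ᶠ l in atTop, 0 ≤ l * (laplace u l - laplace u (2 * l)) := by
    filter_upwards [hJ_ge, hu_inv] with l hl hul
    exact nonneg_of_mul_nonneg_right (hul.trans hl) (by positivity)
  have hupper : (fun l ↦ u l⁻¹) =O[atTop] η :=
    (isBigO_of_eventually_le_mul hu_inv hJ0 hJ_ge).trans hJ.1
  exact ⟨hupper,
    isBigO_comp_inv_of_isBigO_mul_laplace_sub hα hu hanti hint hη0 hη hupper hJ0 hJ.2⟩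

end Laplace

/-- The Gaussian heat kernel `(4πt)^(-d/2) exp(-ρ/(4t))` in dimension `d` at time `t` and squared
distance `ρ`. The dimension is real, since only the exponent matters. -/
noncomputable def heatKernel (d ρ t : ℝ) : ℝ :=
  (4 * π * t) ^ (-d / 2) * exp (-(ρ / (4 * t)))

/-- The radial Green function of Brownian motion in dimension `d` subordinated by a subordinator
with potential density `u`, as a function of the squared distance `ρ`. -/
noncomputable def green (d : ℝ) (u : ℝ → ℝ) (ρ : ℝ) : ℝ :=
  ∫ t in Ioi 0, heatKernel d ρ t * u t

section Green

lemma rpow_mul_exp_neg_le {a y : ℝ} (ha : 0 < a) (hy : 0 ≤ y) :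
    y ^ a * exp (-y) ≤ (a * exp (-1)) ^ a :=
  calc y ^ a * exp (-y) = (a * (y / a * exp (-(y / a)))) ^ a := by
        rw [← mul_assoc, mul_div_cancel₀ y ha.ne', mul_rpow hy (exp_pos _).le, ← exp_mul, neg_mul,
          div_mul_cancel₀ y ha.ne']
    _ ≤ (a * exp (-1)) ^ a := by
        gcongr
        exact mul_exp_neg_le_exp_neg_one _

lemma rpow_neg_mul_exp_neg_div_le {a ρ t : ℝ} (ha : 0 < a) (hρ : 0 < ρ) (ht : 0 < t) :
    t ^ (-a) * exp (-(ρ / (4 * t))) ≤ (4 * (a * exp (-1))) ^ a * ρ ^ (-a) := by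
  have hy : 0 ≤ ρ / (4 * t) := by positivity
  have ht_eq : t ^ (-a) = 4 ^ a * ρ ^ (-a) * (ρ / (4 * t)) ^ a := by
    have : 0 < ρ ^ a := rpow_pos_of_pos hρ a
    have : 0 < t ^ a := rpow_pos_of_pos ht a
    rw [div_rpow hρ.le (by positivity), mul_rpow zero_le_four ht.le, rpow_neg ht.le, rpow_neg hρ.le]
    field_simp
  calc t ^ (-a) * exp (-(ρ / (4 * t)))
      = 4 ^ a * ρ ^ (-a) * ((ρ / (4 * t)) ^ a * exp (-(ρ / (4 * t)))) := by rw [ht_eq]; ring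
    _ ≤ 4 ^ a * ρ ^ (-a) * (a * exp (-1)) ^ a := by
        gcongr
        exact rpow_mul_exp_neg_le ha hy
    _ = (4 * (a * exp (-1))) ^ a * ρ ^ (-a) := by
        rw [mul_rpow zero_le_four (by positivity)]; ring

variable {d ρ t : ℝ}

lemma heatKernel_pos (ht : 0 < t) : 0 < heatKernel d ρ t := by
  unfold heatKernel
  positivity

lemma measurable_heatKernel : Measurable (heatKernel d ρ) := by
  unfold heatKernel
  fun_prop

lemma heatKernel_eq_mul_rpow (ht : 0 < t) :
    heatKernel d ρ t = (4 * π) ^ (-d / 2) * (t ^ (-d / 2) * exp (-(ρ / (4 * t)))) := by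
  rw [heatKernel, mul_rpow (by positivity) ht.le, mul_assoc]

lemma heatKernel_le_mul_rpow_time (hρ : 0 ≤ ρ) (ht : 0 < t) :
    heatKernel d ρ t ≤ (4 * π) ^ (-d / 2) * t ^ (-d / 2) := by
  rw [heatKernel_eq_mul_rpow ht]
  gcongr
  refine mul_le_of_le_one_right (rpow_nonneg ht.le _) (exp_le_one_iff.2 (neg_nonpos.2 ?_))
  positivity

lemma heatKernel_le_mul_rpow_dist (hd : 0 < d) (hρ : 0 < ρ) (ht : 0 < t) :
    heatKernel d ρ t ≤
      (4 * π) ^ (-d / 2) * ((4 * (d / 2 * exp (-1))) ^ (d / 2) * ρ ^ (-d / 2)) := by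
  rw [heatKernel_eq_mul_rpow ht, neg_div]
  exact mul_le_mul_of_nonneg_left (rpow_neg_mul_exp_neg_div_le (half_pos hd) hρ ht) (by positivity)

lemma heatKernel_le_exp_mul_heatKernel {ρ' T : ℝ} (hρ : 0 ≤ ρ) (hρ' : 0 ≤ ρ') (hT : 0 < T)
    (ht : T ≤ t) : heatKernel d ρ t ≤ exp (ρ' / (4 * T)) * heatKernel d ρ' t := by
  have ht0 : 0 < t := hT.trans_le ht
  have hexp : exp (-(ρ / (4 * t))) ≤ exp (ρ' / (4 * T)) * exp (-(ρ' / (4 * t))) := by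
    rw [← exp_add, exp_le_exp]
    have : ρ' / (4 * t) ≤ ρ' / (4 * T) := by gcongr
    have : 0 ≤ ρ / (4 * t) := by positivity
    linarith
  rw [heatKernel, heatKernel, mul_left_comm]
  gcongr

variable {u : ℝ → ℝ}

lemma heatKernel_mul_nonneg (hu : ∀ t > 0, 0 ≤ u t) (ht : 0 < t) : 0 ≤ heatKernel d ρ t * u t :=
  mul_nonneg (heatKernel_pos ht).le (hu t ht)

lemma green_nonneg (hu : ∀ t > 0, 0 ≤ u t) : 0 ≤ green d u ρ :=
  setIntegral_nonneg measurableSet_Ioi fun _ ht ↦ heatKernel_mul_nonneg hu ht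

lemma integrableOn_Ioc_of_integrableOn_laplace {T : ℝ}
    (hint : IntegrableOn (fun t ↦ exp (-(1 * t)) * u t) (Ioi 0)) : IntegrableOn u (Ioc 0 T) := by
  have hprod : IntegrableOn (fun t ↦ exp t * (exp (-(1 * t)) * u t)) (Ioc 0 T) := by
    refine (hint.mono_set Ioc_subset_Ioi_self).bdd_mul (c := exp T)
      measurable_exp.aestronglyMeasurable ?_
    filter_upwards [ae_restrict_mem measurableSet_Ioc] with t ht
    rw [norm_of_nonneg (exp_pos t).le]
    exact exp_le_exp.2 ht.2
  simpa only [← mul_assoc, ← exp_add, one_mul, add_neg_cancel, exp_zero] using hprod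

lemma integrableOn_Ioi_rpow_mul {a R : ℝ} (hR : 0 < R) (hu : ∀ t > 0, 0 ≤ u t)
    (hanti : AntitoneOn u (Ioi 0))
    (hint : ∀ l > 0, IntegrableOn (fun t ↦ exp (-(l * t)) * u t) (Ioi 0))
    (h : IntegrableOn (fun l ↦ l ^ (a - 1) * laplace u l) (Ioo 0 R)) :
    IntegrableOn (fun t ↦ t ^ (-a) * u t) (Ioi R⁻¹) := by
  have hsub : Ioi R⁻¹ ⊆ Ioi 0 := Ioi_subset_Ioi (inv_pos.2 hR).le
  have hind : IntegrableOn ((Ioo 0 R).indicator fun l ↦ l ^ (a - 1) * laplace u l) (Ioi 0) :=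
    ((integrable_indicator_iff measurableSet_Ioo).2 h).integrableOn
  have hsubst := ((integrableOn_Ioi_comp_rpow_iff' _ (neg_ne_zero.2 one_ne_zero)).2
    hind).mono_set hsub
  refine (hsubst.const_mul (4 * exp 2)).mono' ?_ ?_
  · exact ((measurable_id.pow_const (-a)).aestronglyMeasurable).mul
      ((aemeasurable_restrict_of_antitoneOn measurableSet_Ioi
        (hanti.mono hsub)).aestronglyMeasurable)
  · filter_upwards [ae_restrict_mem measurableSet_Ioi] with t ht
    have ht0 : 0 < t := hsub ht
    have htR : t⁻¹ ∈ Ioo 0 R := ⟨inv_pos.2 ht0, inv_lt_of_inv_lt₀ hR ht⟩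
    have hbound := comp_inv_le_mul_laplace hu hanti hint (inv_pos.2 ht0)
    have hpow : t ^ (-a) * t⁻¹ = t ^ (-1 - 1 : ℝ) * t⁻¹ ^ (a - 1) := by
      rw [← rpow_neg_one t, ← rpow_mul ht0.le, ← rpow_add ht0, ← rpow_add ht0]
      ring_nf
    rw [inv_inv] at hbound
    rw [norm_of_nonneg (mul_nonneg (rpow_nonneg ht0.le _) (hu t ht0)), rpow_neg_one,
      indicator_of_mem htR, smul_eq_mul]
    calc t ^ (-a) * u t ≤ t ^ (-a) * (4 * exp 2 * (t⁻¹ * laplace u t⁻¹)) := by gcongr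
      _ = 4 * exp 2 * (t ^ (-a) * t⁻¹ * laplace u t⁻¹) := by ring
      _ = 4 * exp 2 * (t ^ (-1 - 1 : ℝ) * (t⁻¹ ^ (a - 1) * laplace u t⁻¹)) := by
          rw [hpow, mul_assoc (t ^ (-1 - 1 : ℝ))]

lemma integrableOn_heatKernel_mul {R : ℝ} (hd : 0 < d) (hR : 0 < R) (hu : ∀ t > 0, 0 ≤ u t)
    (hanti : AntitoneOn u (Ioi 0))
    (hint : ∀ l > 0, IntegrableOn (fun t ↦ exp (-(l * t)) * u t) (Ioi 0))
    (htrans : IntegrableOn (fun l ↦ l ^ (d / 2 - 1) * laplace u l) (Ioo 0 R)) (hρ : 0 < ρ) :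
    IntegrableOn (fun t ↦ heatKernel d ρ t * u t) (Ioi 0) := by
  have hR' : 0 < R⁻¹ := inv_pos.2 hR
  rw [← Ioc_union_Ioi_eq_Ioi hR'.le]
  refine IntegrableOn.union ?_ ?_
  · refine (integrableOn_Ioc_of_integrableOn_laplace (hint 1 one_pos)).bdd_mul
      (c := (4 * π) ^ (-d / 2) * ((4 * (d / 2 * exp (-1))) ^ (d / 2) * ρ ^ (-d / 2)))
      measurable_heatKernel.aestronglyMeasurable ?_
    filter_upwards [ae_restrict_mem measurableSet_Ioc] with t ht
    rw [norm_of_nonneg (heatKernel_pos ht.1).le]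
    exact heatKernel_le_mul_rpow_dist hd hρ ht.1
  · have htail := (integrableOn_Ioi_rpow_mul hR hu hanti hint htrans).const_mul ((4 * π) ^ (-d / 2))
    refine htail.mono' (measurable_heatKernel.aestronglyMeasurable.mul
      ((aemeasurable_restrict_of_antitoneOn measurableSet_Ioi
        (hanti.mono (Ioi_subset_Ioi hR'.le))).aestronglyMeasurable)) ?_
    filter_upwards [ae_restrict_mem measurableSet_Ioi] with t ht
    have ht0 : 0 < t := hR'.trans ht
    rw [norm_of_nonneg (heatKernel_mul_nonneg hu ht0), ← mul_assoc, ← neg_div]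
    exact mul_le_mul_of_nonneg_right (heatKernel_le_mul_rpow_time hρ.le ht0) (hu t ht0)

lemma mul_rpow_le_green (hd : 0 ≤ d) (hu : ∀ t > 0, 0 ≤ u t) (hanti : AntitoneOn u (Ioi 0))
    (hρ : 0 < ρ) (hint : IntegrableOn (fun t ↦ heatKernel d ρ t * u t) (Ioi 0)) :
    (4 * π) ^ (-d / 2) * exp (-(1 / 2)) / 2 * (ρ ^ (1 - d / 2) * u ρ) ≤ green d u ρ := by
  have hsub : Ioc (ρ / 2) ρ ⊆ Ioi 0 := fun t ht ↦ (half_pos hρ).trans ht.1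
  have hkernel : ∀ t ∈ Ioc (ρ / 2) ρ,
      (4 * π) ^ (-d / 2) * (ρ ^ (-d / 2) * exp (-(1 / 2))) ≤ heatKernel d ρ t := by
    intro t ht
    have ht0 : 0 < t := hsub ht
    rw [heatKernel_eq_mul_rpow ht0]
    gcongr ?_ * (?_ * ?_)
    · exact rpow_le_rpow_of_nonpos ht0 ht.2 (by linarith)
    · rw [exp_le_exp, neg_le_neg_iff, div_le_div_iff₀ (by positivity) two_pos]
      linarith [ht.1]
  calc (4 * π) ^ (-d / 2) * exp (-(1 / 2)) / 2 * (ρ ^ (1 - d / 2) * u ρ)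
      = ∫ _ in Ioc (ρ / 2) ρ, (4 * π) ^ (-d / 2) * (ρ ^ (-d / 2) * exp (-(1 / 2))) * u ρ := by
        rw [setIntegral_const, Real.volume_real_Ioc_of_le (half_le_self hρ.le), sub_half,
          smul_eq_mul, sub_eq_add_neg, ← neg_div 2 d, rpow_add hρ, rpow_one]
        ring
    _ ≤ ∫ t in Ioc (ρ / 2) ρ, heatKernel d ρ t * u t :=
        setIntegral_mono_on (integrableOn_const measure_Ioc_lt_top.ne) (hint.mono_set hsub)
          measurableSet_Ioc fun t ht ↦ mul_le_mul (hkernel t ht) (hanti (hsub ht) hρ ht.2)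
            (hu ρ hρ) (heatKernel_pos (hsub ht)).le
    _ ≤ green d u ρ := by
        refine setIntegral_mono_set hint ?_ hsub.eventuallyLE
        filter_upwards [ae_restrict_mem measurableSet_Ioi] with t ht
        exact heatKernel_mul_nonneg hu ht

variable {α κ : ℝ}

lemma heatKernel_mul_le_of_le_rpow_div {C y z : ℝ} (hα : 0 < d / 2 + α) (hρ : 0 < ρ) (ht : 0 < t)
    (hC : 0 ≤ C) (hz : 0 ≤ z) (hyz : y ≤ C * (ρ / t) ^ α * z) :
    heatKernel d ρ t * y ≤ (4 * π) ^ (-d / 2) * C *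
      (4 * ((d / 2 + α) * exp (-1))) ^ (d / 2 + α) * ρ ^ (-d / 2) * z := by
  set K := (4 * ((d / 2 + α) * exp (-1))) ^ (d / 2 + α)
  have hpow_t : t ^ (-(d / 2 + α)) = t ^ (-d / 2) * (t ^ α)⁻¹ := by
    rw [neg_add, rpow_add ht, rpow_neg ht.le α, neg_div]
  have hpow_ρ : ρ ^ (-d / 2) = ρ ^ (-(d / 2 + α)) * ρ ^ α := by
    rw [← rpow_add hρ, neg_add, neg_add_cancel_right, neg_div]
  calc heatKernel d ρ t * y
      ≤ (4 * π) ^ (-d / 2) * (t ^ (-d / 2) * exp (-(ρ / (4 * t)))) * (C * (ρ / t) ^ α * z) := by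
        rw [heatKernel_eq_mul_rpow ht]
        gcongr
    _ = (4 * π) ^ (-d / 2) * C * (t ^ (-(d / 2 + α)) * exp (-(ρ / (4 * t)))) * ρ ^ α * z := by
        rw [hpow_t, div_rpow hρ.le ht.le]; ring
    _ ≤ (4 * π) ^ (-d / 2) * C * (K * ρ ^ (-(d / 2 + α))) * ρ ^ α * z := by
        gcongr (4 * π) ^ (-d / 2) * C * ?_ * ρ ^ α * z
        exact rpow_neg_mul_exp_neg_div_le hα hρ ht
    _ = (4 * π) ^ (-d / 2) * C * K * ρ ^ (-d / 2) * z := by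
        rw [hpow_ρ]; ring

lemma setIntegral_Ioc_zero_heatKernel_mul_isBigO (hα : 0 < d / 2 + α) (hu : ∀ t > 0, 0 ≤ u t)
    (hint : ∀ ρ > 0, IntegrableOn (fun t ↦ heatKernel d ρ t * u t) (Ioi 0))
    (hscal : UpperScaling (fun l ↦ u l⁻¹) α) :
    (fun ρ ↦ ∫ t in Ioc 0 ρ, heatKernel d ρ t * u t) =O[𝓝[>] 0] fun ρ ↦ ρ ^ (1 - d / 2) * u ρ := by
  obtain ⟨C, hC, hscal⟩ := hscal.exists_le_of_comp_inv
  set K := (4 * π) ^ (-d / 2) * C * (4 * ((d / 2 + α) * exp (-1))) ^ (d / 2 + α)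
  refine isBigO_of_eventually_le_mul (C := K) ?_ ?_ ?_
  · exact .of_forall fun ρ ↦ setIntegral_nonneg measurableSet_Ioc
      fun t ht ↦ heatKernel_mul_nonneg hu ht.1
  · filter_upwards [self_mem_nhdsWithin] with ρ (hρ : 0 < ρ)
    exact mul_nonneg (rpow_nonneg hρ.le _) (hu ρ hρ)
  filter_upwards [hscal, self_mem_nhdsWithin] with ρ hscalρ (hρ : 0 < ρ)
  calc ∫ t in Ioc 0 ρ, heatKernel d ρ t * u t ≤ ∫ _ in Ioc 0 ρ, K * ρ ^ (-d / 2) * u ρ :=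
        setIntegral_mono_on ((hint ρ hρ).mono_set Ioc_subset_Ioi_self)
          (integrableOn_const measure_Ioc_lt_top.ne) measurableSet_Ioc fun t ht ↦
          heatKernel_mul_le_of_le_rpow_div hα hρ ht.1 hC.le (hu ρ hρ) (hscalρ t ht)
    _ = K * (ρ ^ (1 - d / 2) * u ρ) := by
        rw [setIntegral_const, Real.volume_real_Ioc_of_le hρ.le, sub_zero, smul_eq_mul,
          sub_eq_add_neg 1, ← neg_div, rpow_add hρ, rpow_one]
        ring

lemma setIntegral_Ioc_heatKernel_mul_le {C T : ℝ} (hκ : 1 - d / 2 < κ) (hρ : 0 < ρ) (hC : 0 ≤ C)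
    (huρ : 0 ≤ u ρ) (hu : ∀ t ∈ Ioc ρ T, 0 ≤ u t)
    (hint : IntegrableOn (fun t ↦ heatKernel d ρ t * u t) (Ioc ρ T))
    (hscal : ∀ t ∈ Ioc ρ T, u t ≤ C * (ρ / t) ^ κ * u ρ) :
    ∫ t in Ioc ρ T, heatKernel d ρ t * u t ≤
      (4 * π) ^ (-d / 2) * C / (d / 2 + κ - 1) * (ρ ^ (1 - d / 2) * u ρ) := by
  have hp : -d / 2 - κ < -1 := by linarith
  set M := (4 * π) ^ (-d / 2) * C * ρ ^ κ * u ρ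
  have hpow : IntegrableOn (fun t : ℝ ↦ M * t ^ (-d / 2 - κ)) (Ioi ρ) :=
    (integrableOn_Ioi_rpow_of_lt hp hρ).const_mul M
  have hbound : ∀ t ∈ Ioc ρ T, heatKernel d ρ t * u t ≤ M * t ^ (-d / 2 - κ) := by
    intro t ht
    have ht0 : 0 < t := hρ.trans ht.1
    calc heatKernel d ρ t * u t
        ≤ (4 * π) ^ (-d / 2) * t ^ (-d / 2) * (C * (ρ / t) ^ κ * u ρ) :=
          mul_le_mul (heatKernel_le_mul_rpow_time hρ.le ht0) (hscal t ht) (hu t ht)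
            (by positivity)
      _ = M * t ^ (-d / 2 - κ) := by rw [div_rpow hρ.le ht0.le, rpow_sub ht0]; ring
  calc ∫ t in Ioc ρ T, heatKernel d ρ t * u t ≤ ∫ t in Ioc ρ T, M * t ^ (-d / 2 - κ) :=
        setIntegral_mono_on hint (hpow.mono_set Ioc_subset_Ioi_self) measurableSet_Ioc hbound
    _ ≤ ∫ t in Ioi ρ, M * t ^ (-d / 2 - κ) := by
        refine setIntegral_mono_set hpow ?_ Ioc_subset_Ioi_self.eventuallyLE
        filter_upwards [ae_restrict_mem measurableSet_Ioi] with t ht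
        have : 0 < t := hρ.trans ht
        positivity
    _ = (4 * π) ^ (-d / 2) * C / (d / 2 + κ - 1) * (ρ ^ (1 - d / 2) * u ρ) := by
        have hexp : ρ ^ (1 - d / 2) = ρ ^ κ * ρ ^ (-d / 2 - κ + 1) := by
          rw [← rpow_add hρ]; ring_nf
        rw [integral_const_mul, integral_Ioi_rpow_of_lt hp hρ, hexp,
          show -d / 2 - κ + 1 = -(d / 2 + κ - 1) by ring, neg_div_neg_eq]
        ring

lemma eventually_setIntegral_Ioc_heatKernel_mul_isBigO (hκ : 1 - d / 2 < κ) (hu : ∀ t > 0, 0 ≤ u t)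
    (hint : ∀ ρ > 0, IntegrableOn (fun t ↦ heatKernel d ρ t * u t) (Ioi 0))
    (hscal : LowerScaling (fun l ↦ u l⁻¹) κ) :
    ∀ᶠ T in 𝓝[>] (0 : ℝ), (fun ρ ↦ ∫ t in Ioc ρ T, heatKernel d ρ t * u t) =O[𝓝[>] 0]
      fun ρ ↦ ρ ^ (1 - d / 2) * u ρ := by
  obtain ⟨C, hC, hscal⟩ := hscal.exists_le_of_comp_inv
  obtain ⟨T₀, hT₀ : 0 < T₀, hscal⟩ := mem_nhdsGT_iff_exists_Ioc_subset.1 hscal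
  filter_upwards [Ioc_mem_nhdsGT hT₀] with T hT
  refine isBigO_of_eventually_le_mul (C := (4 * π) ^ (-d / 2) * C / (d / 2 + κ - 1)) ?_ ?_ ?_
  · filter_upwards [self_mem_nhdsWithin] with ρ (hρ : 0 < ρ)
    exact setIntegral_nonneg measurableSet_Ioc fun t ht ↦ heatKernel_mul_nonneg hu (hρ.trans ht.1)
  · filter_upwards [self_mem_nhdsWithin] with ρ (hρ : 0 < ρ)
    exact mul_nonneg (rpow_nonneg hρ.le _) (hu ρ hρ)
  filter_upwards [self_mem_nhdsWithin] with ρ (hρ : 0 < ρ)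
  refine setIntegral_Ioc_heatKernel_mul_le hκ hρ hC.le (hu ρ hρ) (fun t ht ↦ hu t (hρ.trans ht.1))
    ((hint ρ hρ).mono_set fun t ht ↦ hρ.trans ht.1) fun t ht ↦ ?_
  exact hscal ⟨hρ.trans ht.1, ht.2.trans hT.2⟩ ρ ⟨hρ, ht.1.le⟩

lemma one_isBigO_rpow_mul (hκ : 1 - d / 2 < κ) (hu : ∀ t > 0, 0 < u t)
    (hscal : LowerScaling (fun l ↦ u l⁻¹) κ) :
    (fun _ ↦ (1 : ℝ)) =O[𝓝[>] 0] fun ρ ↦ ρ ^ (1 - d / 2) * u ρ := by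
  have hu_inv : ∀ᶠ l in atTop, 0 < u l⁻¹ :=
    (eventually_gt_atTop 0).mono fun l hl ↦ hu _ (inv_pos.2 hl)
  have hpow : (fun ρ : ℝ ↦ ρ⁻¹ ^ κ) =O[𝓝[>] 0] u := by
    simpa only [Function.comp_def, inv_inv] using
      (hscal.rpow_isBigO hu_inv).comp_tendsto tendsto_inv_nhdsGT_zero
  refine IsBigO.trans ?_ ((isBigO_refl (fun ρ : ℝ ↦ ρ ^ (1 - d / 2)) _).mul hpow)
  refine isBigO_of_eventually_le_mul (C := 1) (.of_forall fun _ ↦ zero_le_one) ?_ ?_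
  · filter_upwards [self_mem_nhdsWithin] with ρ (hρ : 0 < ρ)
    positivity
  · filter_upwards [Ioc_mem_nhdsGT one_pos] with ρ hρ
    rw [one_mul, inv_rpow hρ.1.le, ← rpow_neg hρ.1.le, ← rpow_add hρ.1]
    exact one_le_rpow_of_pos_of_le_one_of_nonpos hρ.1 hρ.2 (by linarith)

lemma setIntegral_Ioi_heatKernel_mul_isBigO_one {T : ℝ} (hT : 0 < T) (hu : ∀ t > 0, 0 ≤ u t)
    (hint : ∀ ρ > 0, IntegrableOn (fun t ↦ heatKernel d ρ t * u t) (Ioi 0)) :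
    (fun ρ ↦ ∫ t in Ioi T, heatKernel d ρ t * u t) =O[𝓝[>] 0] fun _ ↦ (1 : ℝ) := by
  have hsub : Ioi T ⊆ Ioi 0 := Ioi_subset_Ioi hT.le
  refine isBigO_of_eventually_le_mul
    (C := exp (1 / (4 * T)) * ∫ t in Ioi T, heatKernel d 1 t * u t) ?_
    (.of_forall fun _ ↦ zero_le_one) ?_
  · exact .of_forall fun ρ ↦ setIntegral_nonneg measurableSet_Ioi
      fun t ht ↦ heatKernel_mul_nonneg hu (hsub ht)
  filter_upwards [self_mem_nhdsWithin] with ρ (hρ : 0 < ρ)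
  rw [mul_one, ← integral_const_mul]
  refine setIntegral_mono_on ((hint ρ hρ).mono_set hsub)
    (((hint 1 one_pos).mono_set hsub).const_mul _) measurableSet_Ioi fun t ht ↦ ?_
  rw [← mul_assoc]
  exact mul_le_mul_of_nonneg_right
    (heatKernel_le_exp_mul_heatKernel hρ.le zero_le_one hT (le_of_lt ht)) (hu t (hsub ht))

theorem green_isTheta (hd : 0 ≤ d) (hα : 0 < d / 2 + α) (hκ : 1 - d / 2 < κ)
    (hu : ∀ t > 0, 0 < u t) (hanti : AntitoneOn u (Ioi 0))
    (hint : ∀ ρ > 0, IntegrableOn (fun t ↦ heatKernel d ρ t * u t) (Ioi 0))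
    (hupper : UpperScaling (fun l ↦ u l⁻¹) α) (hlower : LowerScaling (fun l ↦ u l⁻¹) κ) :
    green d u =Θ[𝓝[>] 0] fun ρ ↦ ρ ^ (1 - d / 2) * u ρ := by
  have hu0 : ∀ t > 0, 0 ≤ u t := fun t ht ↦ (hu t ht).le
  constructor
  · obtain ⟨T, hmiddle, hT : 0 < T⟩ := ((eventually_setIntegral_Ioc_heatKernel_mul_isBigO hκ hu0
      hint hlower).and self_mem_nhdsWithin).exists
    have hsmall := setIntegral_Ioc_zero_heatKernel_mul_isBigO hα hu0 hint hupper
    have htail := (setIntegral_Ioi_heatKernel_mul_isBigO_one hT hu0 hint).trans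
      (one_isBigO_rpow_mul hκ hu hlower)
    refine ((hsmall.add hmiddle).add htail).congr' ?_ .rfl
    filter_upwards [Ioc_mem_nhdsGT hT] with ρ hρ
    have hI := hint ρ hρ.1
    rw [green, ← Ioc_union_Ioi_eq_Ioi hT.le, setIntegral_union (Ioc_disjoint_Ioi le_rfl)
        measurableSet_Ioi (hI.mono_set Ioc_subset_Ioi_self) (hI.mono_set (Ioi_subset_Ioi hT.le)),
      ← Ioc_union_Ioc_eq_Ioc hρ.1.le hρ.2, setIntegral_union (Ioc_disjoint_Ioc_of_le le_rfl)
        measurableSet_Ioc (hI.mono_set Ioc_subset_Ioi_self)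
        (hI.mono_set fun t ht ↦ hρ.1.trans ht.1)]
  · refine isBigO_of_eventually_le_mul (C := ((4 * π) ^ (-d / 2) * exp (-(1 / 2)) / 2)⁻¹) ?_
      (.of_forall fun ρ ↦ green_nonneg hu0) ?_
    · filter_upwards [self_mem_nhdsWithin] with ρ (hρ : 0 < ρ)
      exact mul_nonneg (rpow_nonneg hρ.le _) (hu0 ρ hρ)
    · filter_upwards [self_mem_nhdsWithin] with ρ (hρ : 0 < ρ)
      rw [← div_eq_inv_mul, le_div_iff₀' (by positivity)]
      exact mul_rpow_le_green hd hu0 hanti hρ (hint ρ hρ)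

end Green

section PotentialDensity

variable {φ φ' u : ℝ → ℝ} {d δ : ℝ}

lemma exists_lowerScaling_potentialRate (hφ : ∀ l > 0, 0 < φ l)
    (hderiv : ∀ l > 0, HasDerivAt φ (φ' l) l) (hφ' : ∀ l > 0, 0 < φ' l)
    (hanti : AntitoneOn φ' (Ioi 0)) (hη : 2 < d → MonotoneOn (potentialRate φ φ') (Ioi 0))
    (hδ : δ ≤ 1) (hA : UpperScaling φ' (-δ))
    (hB : d ≤ 2 → ∃ δ' < 2 * δ + (d - 2) / 2, LowerScaling φ' (-δ')) :
    ∃ κ > 1 - d / 2, LowerScaling (potentialRate φ φ') κ := by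
  obtain hd | hd := lt_or_ge 2 d
  · exact ⟨0, by linarith, lowerScaling_zero_of_monotoneOn (hη hd)⟩
  · obtain ⟨δ', hδ', hlower⟩ := hB hd
    obtain ⟨γ, hδ'γ, hγδ⟩ : ∃ γ, (δ' + 1 - d / 2) / 2 < γ ∧ γ < δ :=
      exists_between (by linarith)
    have hφ'0 : ∀ᶠ l in atTop, 0 ≤ φ' l := (eventually_gt_atTop 0).mono fun l hl ↦ (hφ' l hl).le
    have hupper : UpperScaling φ (1 - γ) :=
      (hA.mono_exponent (neg_le_neg hγδ.le) hφ'0).of_hasDerivAt (hγδ.trans_le hδ) hφ hderiv hanti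
    exact ⟨_, by linarith, lowerScaling_potentialRate hφ hφ' hlower hupper⟩

lemma comp_inv_isTheta_potentialRate {α κ : ℝ} (hφ : ∀ l > 0, 0 < φ l)
    (hderiv : ∀ l > 0, HasDerivAt φ (φ' l) l) (hφ' : ∀ l > 0, 0 < φ' l)
    (hanti : AntitoneOn φ' (Ioi 0)) (hα : α < 2)
    (hupper : UpperScaling (potentialRate φ φ') α) (hlower : LowerScaling (potentialRate φ φ') κ)
    (hu : ∀ t > 0, 0 ≤ u t) (huanti : AntitoneOn u (Ioi 0))
    (hlap : ∀ l > 0, laplace u l = 1 / φ l) :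
    (fun l ↦ u l⁻¹) =Θ[atTop] potentialRate φ φ' := by
  have hint : ∀ l > 0, IntegrableOn (fun t ↦ exp (-(l * t)) * u t) (Ioi 0) := fun l hl ↦
    integrableOn_laplace_of_ne_zero (hlap l hl ▸ one_div_ne_zero (hφ l hl).ne')
  refine comp_inv_isTheta_of_mul_laplace_sub_isTheta hα hu huanti hint
    ((eventually_gt_atTop 0).mono fun l hl ↦ (potentialRate_pos hφ hφ' l hl).le) hupper ?_
  refine EventuallyEq.trans_isTheta ?_ (mul_sub_inv_isTheta_potentialRate hφ
    (monotoneOn_of_hasDerivAt_pos hderiv hφ') hderiv hφ' hanti hlower)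
  filter_upwards [eventually_gt_atTop 0] with l hl
  rw [hlap l hl, hlap (2 * l) (by positivity)]

theorem green_isTheta_potentialRate (hd : 0 < d) (hφ : ∀ l > 0, 0 < φ l)
    (hderiv : ∀ l > 0, HasDerivAt φ (φ' l) l) (hφ' : ∀ l > 0, 0 < φ' l)
    (hanti : AntitoneOn φ' (Ioi 0)) (hη : 2 < d → MonotoneOn (potentialRate φ φ') (Ioi 0))
    (hδ0 : 0 < δ) (hδ1 : δ ≤ 1) (hA : UpperScaling φ' (-δ))
    (hu : ∀ t > 0, 0 < u t) (huanti : AntitoneOn u (Ioi 0))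
    (hlap : ∀ l > 0, laplace u l = 1 / φ l)
    (htrans : ∃ R > 0, IntegrableOn (fun l ↦ l ^ (d / 2 - 1) / φ l) (Ioo 0 R))
    (hB : d ≤ 2 → ∃ δ' < 2 * δ + (d - 2) / 2, LowerScaling φ' (-δ')) :
    green d u =Θ[𝓝[>] 0] fun ρ ↦ ρ ^ (1 - d / 2) * potentialRate φ φ' ρ⁻¹ := by
  have hu0 : ∀ t > 0, 0 ≤ u t := fun t ht ↦ (hu t ht).le
  have hη0 : ∀ᶠ l in atTop, 0 < potentialRate φ φ' l :=
    (eventually_gt_atTop 0).mono (potentialRate_pos hφ hφ')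
  have hu_inv : ∀ᶠ l in atTop, 0 < u l⁻¹ :=
    (eventually_gt_atTop 0).mono fun l hl ↦ hu _ (inv_pos.2 hl)
  obtain ⟨R, hR, htrans⟩ := htrans
  have hint : ∀ ρ > 0, IntegrableOn (fun t ↦ heatKernel d ρ t * u t) (Ioi 0) := by
    refine fun ρ ↦ integrableOn_heatKernel_mul hd hR hu0 huanti (fun l hl ↦
      integrableOn_laplace_of_ne_zero (hlap l hl ▸ one_div_ne_zero (hφ l hl).ne')) ?_
    refine htrans.congr_fun (fun l hl ↦ ?_) measurableSet_Ioo
    rw [hlap l hl.1, mul_one_div]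
  have hupper : UpperScaling (potentialRate φ φ') (2 + -δ) :=
    upperScaling_potentialRate hφ (monotoneOn_of_hasDerivAt_pos hderiv hφ') hφ' hA
  obtain ⟨κ, hκ, hlower⟩ :=
    exists_lowerScaling_potentialRate hφ hderiv hφ' hanti hη hδ1 hA hB
  have huη : (fun l ↦ u l⁻¹) =Θ[atTop] potentialRate φ φ' :=
    comp_inv_isTheta_potentialRate hφ hderiv hφ' hanti (by linarith) hupper hlower hu0 huanti hlap
  have hdensity : u =Θ[𝓝[>] 0] fun ρ ↦ potentialRate φ φ' ρ⁻¹ := by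
    simpa only [Function.comp_def, inv_inv] using isTheta_comp_tendsto huη tendsto_inv_nhdsGT_zero
  exact (green_isTheta hd.le (by linarith) hκ hu huanti hint
    (hupper.of_isTheta huη.symm (hη0.mono fun _ ↦ le_of_lt) (hu_inv.mono fun _ ↦ le_of_lt))
    (hlower.of_isTheta huη.symm hη0 hu_inv)).trans (.mul (isTheta_refl _ _) hdensity)

lemma rpow_mul_potentialRate_inv {r : ℝ} (hr : 0 < r) :
    (r ^ 2) ^ (1 - d / 2) * potentialRate φ φ' (r ^ 2)⁻¹ =
      r ^ (-d - 2) * (φ' (r ^ 2)⁻¹ / φ (r ^ 2)⁻¹ ^ 2) := by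
  have hpow : (r ^ 2) ^ (1 - d / 2) * (r ^ 2)⁻¹ ^ 2 = r ^ (-d - 2) := by
    rw [← rpow_two, ← rpow_mul hr.le, ← rpow_neg hr.le, ← rpow_natCast, ← rpow_mul hr.le,
      ← rpow_add hr]
    ring_nf
  rw [potentialRate, mul_div_assoc, ← mul_assoc, hpow]

end PotentialDensity

lemma exists_forall_mul_le_and_le_mul_of_isTheta {f g : ℝ → ℝ} (h : f =Θ[𝓝[>] 0] g)
    (hf : ∀ x > 0, 0 ≤ f x) (hg : ∀ x > 0, 0 ≤ g x) :
    ∃ c₁ : ℝ, 0 < c₁ ∧ ∃ c₂ : ℝ, 0 < c₂ ∧ ∃ r₀ : ℝ, r₀ ∈ Ioo (0 : ℝ) 1 ∧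
      ∀ r : ℝ, 0 < r → r < r₀ → c₁ * g r ≤ f r ∧ f r ≤ c₂ * g r := by
  have hpos : ∀ {f : ℝ → ℝ}, (∀ x > 0, 0 ≤ f x) → ∀ᶠ x in 𝓝[>] 0, 0 ≤ f x := fun hf ↦ by
    filter_upwards [self_mem_nhdsWithin] using hf
  obtain ⟨C, hC, hupper⟩ := exists_eventually_le_mul_of_isBigO (hpos hg) h.1
  obtain ⟨D, hD, hlower⟩ := exists_eventually_le_mul_of_isBigO (hpos hf) h.2
  obtain ⟨r₀, ⟨hr₀, hr₁⟩, hbound⟩ :=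
    (mem_nhdsGT_iff_exists_mem_Ioc_Ioo_subset one_half_pos).1 (hlower.and hupper)
  refine ⟨D⁻¹, inv_pos.2 hD, C, hC, r₀, ⟨hr₀, hr₁.trans_lt one_half_lt_one⟩, fun r hr hrr₀ ↦ ?_⟩
  exact ⟨(inv_mul_le_iff₀ hD).2 (hbound ⟨hr, hrr₀⟩).1, (hbound ⟨hr, hrr₀⟩).2⟩

theorem stmt_9_general {d δ : ℝ} {φ φ' u : ℝ → ℝ} (hd : 0 < d) (hφ : ∀ l > 0, 0 < φ l)
    (hderiv : ∀ l > 0, HasDerivAt φ (φ' l) l) (hφ' : ∀ l > 0, 0 < φ' l)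
    (hanti : AntitoneOn φ' (Ioi 0)) (hη : 2 < d → MonotoneOn (potentialRate φ φ') (Ioi 0))
    (hδ0 : 0 < δ) (hδ1 : δ ≤ 1) (hA : UpperScaling φ' (-δ))
    (hu : ∀ t > 0, 0 < u t) (huanti : AntitoneOn u (Ioi 0))
    (hlap : ∀ l > 0, laplace u l = 1 / φ l)
    (htrans : ∃ R > 0, IntegrableOn (fun l ↦ l ^ (d / 2 - 1) / φ l) (Ioo 0 R))
    (hB : d ≤ 2 → ∃ δ' < 2 * δ + (d - 2) / 2, LowerScaling φ' (-δ')) :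
    ∃ c₁ : ℝ, 0 < c₁ ∧ ∃ c₂ : ℝ, 0 < c₂ ∧ ∃ r₀ : ℝ, r₀ ∈ Ioo (0 : ℝ) 1 ∧
      ∀ r : ℝ, 0 < r → r < r₀ →
        c₁ * r ^ (-d - 2) * (φ' (r ^ 2)⁻¹ / φ (r ^ 2)⁻¹ ^ 2) ≤ green d u (r ^ 2) ∧
        green d u (r ^ 2) ≤ c₂ * r ^ (-d - 2) * (φ' (r ^ 2)⁻¹ / φ (r ^ 2)⁻¹ ^ 2) := by
  have hsq : Tendsto (fun r : ℝ ↦ r ^ 2) (𝓝[>] 0) (𝓝[>] 0) := by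
    refine tendsto_nhdsWithin_iff.2
      ⟨((continuous_pow 2).tendsto' 0 0 (zero_pow two_ne_zero)).mono_left nhdsWithin_le_nhds, ?_⟩
    filter_upwards [self_mem_nhdsWithin] with r (hr : 0 < r) using pow_pos hr 2
  have hgreen : (fun r ↦ green d u (r ^ 2)) =Θ[𝓝[>] 0]
      fun r ↦ r ^ (-d - 2) * (φ' (r ^ 2)⁻¹ / φ (r ^ 2)⁻¹ ^ 2) := by
    refine (isTheta_comp_tendsto (green_isTheta_potentialRate hd hφ hderiv hφ' hanti hη hδ0 hδ1 hA
      hu huanti hlap htrans hB) hsq).trans_eventuallyEq ?_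
    filter_upwards [self_mem_nhdsWithin] with r hr using rpow_mul_potentialRate_inv hr
  simp only [mul_assoc]
  refine exists_forall_mul_le_and_le_mul_of_isTheta hgreen
    (fun r _ ↦ green_nonneg fun t ht ↦ (hu t ht).le) fun r hr ↦ ?_
  have := hφ' (r ^ 2)⁻¹ (by positivity)
  positivity

end Development

/-- Under (A-1) (decreasing potential density `u` with Laplace
transform `1/φ`), (A-3), transience (Chung–Fuchs criterion), and, for `d ≤ 2`,
condition (B), the radial Green function
`g(r) = ∫₀^∞ (4πt)^{−d/2} e^{−r²/(4t)} u(t) dt` satisfies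
`g(r) ≍ r^{−d−2} φ'(r^{−2})/φ(r^{−2})²` as `r → 0+`. -/
theorem stmt_9 (d : ℕ) (hd : 1 ≤ d) (φ φ' u : ℝ → ℝ) (σ lam₀ δ : ℝ)
    (hφpos : ∀ l : ℝ, 0 < l → 0 < φ l)
    (hφmono : ∀ s t : ℝ, 0 < s → s ≤ t → φ s ≤ φ t)
    (hderiv : ∀ l : ℝ, 0 < l → HasDerivAt φ (φ' l) l)
    (hφ'pos : ∀ l : ℝ, 0 < l → 0 < φ' l)
    (hφ'dec : ∀ s t : ℝ, 0 < s → s ≤ t → φ' t ≤ φ' s)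
    (hη₂ : ∀ s t : ℝ, 0 < s → s ≤ t →
      s ^ 2 * φ' s / (φ s) ^ 2 ≤ t ^ 2 * φ' t / (φ t) ^ 2)
    (hσ : 0 < σ) (hlam₀ : 0 < lam₀) (hδ0 : 0 < δ) (hδ1 : δ ≤ 1)
    (hA3 : ∀ x : ℝ, 1 ≤ x → ∀ l : ℝ, lam₀ ≤ l →
      φ' (l * x) ≤ σ * x ^ (-δ) * φ' l)
    (hupos : ∀ t : ℝ, 0 < t → 0 < u t)
    (hudec : ∀ s t : ℝ, 0 < s → s ≤ t → u t ≤ u s)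
    (hlap : ∀ l : ℝ, 0 < l →
      (∫ t in Ioi (0:ℝ), Real.exp (-(l * t)) * u t) = 1 / φ l)
    (htrans : ∃ R : ℝ, 0 < R ∧
      IntegrableOn (fun l => l ^ ((d : ℝ) / 2 - 1) / φ l) (Ioo 0 R))
    (hB : d ≤ 2 → 0 < (d : ℝ) + 2 * δ - 2 ∧
      ∃ σ' : ℝ, 0 < σ' ∧ ∃ δ' : ℝ,
        1 - (d : ℝ) / 2 < δ' ∧
        δ' < min (1 + (d : ℝ) / 2) (2 * δ + ((d : ℝ) - 2) / 2) ∧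
        ∀ x : ℝ, 1 ≤ x → ∀ l : ℝ, lam₀ ≤ l →
          σ' * x ^ (-δ') * φ' l ≤ φ' (l * x)) :
    ∃ c₁ : ℝ, 0 < c₁ ∧ ∃ c₂ : ℝ, 0 < c₂ ∧ ∃ r₀ : ℝ, r₀ ∈ Ioo (0:ℝ) 1 ∧
      ∀ r : ℝ, 0 < r → r < r₀ →
        c₁ * r ^ (-(d : ℝ) - 2) * (φ' ((r ^ 2)⁻¹) / (φ ((r ^ 2)⁻¹)) ^ 2)
            ≤ (∫ t in Ioi (0:ℝ),
                (4 * π * t) ^ (-(d : ℝ) / 2) * Real.exp (-(r ^ 2 / (4 * t))) * u t) ∧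
        (∫ t in Ioi (0:ℝ),
            (4 * π * t) ^ (-(d : ℝ) / 2) * Real.exp (-(r ^ 2 / (4 * t))) * u t)
          ≤ c₂ * r ^ (-(d : ℝ) - 2) * (φ' ((r ^ 2)⁻¹) / (φ ((r ^ 2)⁻¹)) ^ 2) := by
  have hA : UpperScaling φ' (-δ) :=
    ⟨σ, hσ, (Filter.eventually_ge_atTop lam₀).mono fun l hl x hx ↦ hA3 x hx l hl⟩
  refine stmt_9_general (by exact_mod_cast hd) hφpos hderiv hφ'pos
    (fun s hs t _ ↦ hφ'dec s t hs) (fun _ s hs t _ ↦ hη₂ s t hs) hδ0 hδ1 hA hupos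
    (fun s hs t _ ↦ hudec s t hs) hlap htrans fun hd2 ↦ ?_
  obtain ⟨-, σ', hσ', δ', -, hδ', hscal⟩ := hB (by exact_mod_cast hd2)
  exact ⟨δ', hδ'.trans_le (min_le_right _ _), σ', hσ',
    (Filter.eventually_ge_atTop lam₀).mono fun l hl x hx ↦ hscal x hx l hl⟩
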